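/- For every m ∈ ℕ^n, every x ∈ S_D(m) and every index 1 ≤ i ≤ n with m_i ≥ 1, there exists y ∈ S_D(e_i), where e_i ∈ ℕ^n is the i-th standard unit vector, such that y ≤ x componentwise and x − y ∈ S_D(m − e_i). (This is the type-D case of the paper's decomposition Proposition and its Corollary.) -/

import Mathlib

open Finset
open scoped Pointwise

/-- The `i`-th standard unit vector (1-based coordinates, as a function `ℕ → ℕ`). -/
def unitVec (i : ℕ) : ℕ → ℕ := fun l => if l = i then 1 else 0

/-- The quantity `Q_d(m) = (m_1 + ⋯ + m_{d-1}) + 2(m_d + ⋯ + m_{n-2}) + m_{n-1} + m_n`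
appearing in the type-`D` inequalities. -/
def QD (n : ℕ) (m : ℕ → ℕ) (d : ℕ) : ℕ :=
  (∑ l ∈ Icc 1 (d - 1), m l) + 2 * (∑ l ∈ Icc d (n - 2), m l) + m (n - 1) + m n

/-- The lattice-point set `S_D(m)` of the polytope `P_w(λ)` in type `D_n`, where
`w = s_1 ⋯ s_{n-1} s_n s_{n-2} ⋯ s_1` and `λ = m_1 ω_1 + ⋯ + m_n ω_n`.
A point is a triple `(a, b, d)` where `a` is the 1-based tuple `a_1, …, a_{n-1}`,
`b ∈ ℕ` and `d` is the 1-based tuple `d_2, …, d_{n-1}` (all other coordinates vanish),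
subject to the Dyck-path inequalities (D1)–(D4), the degree-path inequalities (D5)–(D6)
and the inequalities (D7) from paths with coefficients. -/
def SD (n : ℕ) (m : ℕ → ℕ) : Set ((ℕ → ℕ) × ℕ × (ℕ → ℕ)) :=
  {x | (∀ l, (l = 0 ∨ n - 1 < l) → x.1 l = 0) ∧
    (∀ l, (l ≤ 1 ∨ n - 1 < l) → x.2.2 l = 0) ∧
    (∀ j, 1 ≤ j → j ≤ n - 1 →
      ∑ l ∈ Icc 1 j, x.1 l ≤ ∑ l ∈ Icc 1 j, m l) ∧
    ((∑ l ∈ Icc 1 (n - 2), x.1 l) + x.2.1 ≤ (∑ l ∈ Icc 1 (n - 2), m l) + m n) ∧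
    ((∑ l ∈ Icc 1 (n - 1), x.1 l) + x.2.2 (n - 1) ≤ ∑ l ∈ Icc 1 n, m l) ∧
    ((∑ l ∈ Icc 1 (n - 2), x.1 l) + x.2.1 + x.2.2 (n - 1) ≤ ∑ l ∈ Icc 1 n, m l) ∧
    (∀ d, 2 ≤ d → d ≤ n - 2 →
      (∑ l ∈ Icc 1 (n - 1), x.1 l) + ∑ l ∈ Icc d (n - 1), x.2.2 l ≤ QD n m d) ∧
    (∀ d, 2 ≤ d → d ≤ n - 2 →
      (∑ l ∈ Icc 1 (n - 2), x.1 l) + x.2.1 + ∑ l ∈ Icc d (n - 1), x.2.2 l ≤ QD n m d) ∧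
    (∀ d k, 2 ≤ d → d ≤ n - 1 → d - 1 ≤ k → k ≤ n - 2 →
      2 * (∑ l ∈ Icc 1 k, x.1 l) + (∑ l ∈ Icc (k + 1) (n - 1), x.1 l) + x.2.1 +
          ∑ l ∈ Icc d (n - 1), x.2.2 l ≤
        QD n m d + ∑ l ∈ Icc 1 k, m l)}

/-!
Write `s_k` for the slack of (D1) at `k`. Up to moving terms across, (D5)–(D7) say that quantities
`E_d` (the excesses) are bounded by `b`, by `a_{n-1}` and by `s_k` for `k ≥ d - 1`; (D3) and (D4)
are the case `d = n - 1` of the first two. Slacks and excesses are additive in `(m, x)`, so a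
summand `y ≤ x` for `e_i` works as soon as each inequality is at least as slack for `(m, x)` as it
is for `(e_i, y)`.

For `i ≤ n - 2` let `j` be the first index with `i ≤ j ≤ n - 2` and `a_j ≠ 0`, and `j = n - 1` if
there is none. If some `E_d = s_k` with `i < d ≤ k + 1` and `k < j`, then `a_{n-1}`, `b` and all
`s_l` with `l ≥ i` exceed `s_{i-1}`, and `y` consists of one unit in each of `a_{n-1}` and `b`.
Otherwise, if `j ≤ n - 2`, one unit is taken from `a_j` and one from the last nonzero barred
coordinate at a position `≤ i`, if any. If `j = n - 1`, then `a_{n-1}` or `b` replaces `a_j` when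
(D1) at `n - 1` or (D2) is tight; when neither is, `y` has barred units only: the last one, and then
the last remaining one at a position `≤ i`. For `i = n - 1` and `i = n` a single unit is enough: in
`a_{n-1}` or `b` respectively if (D1) at `n - 1` or (D2) is tight, and at the last nonzero barred
coordinate otherwise.
-/

/-! ### Sums over intervals -/

theorem sum_unitVec (c u v : ℕ) :
    ∑ l ∈ Icc u v, unitVec c l = if u ≤ c ∧ c ≤ v then 1 else 0 := by
  simp [unitVec]

theorem unitVec_le {f : ℕ → ℕ} {c : ℕ} (hc : 1 ≤ f c) : unitVec c ≤ f := by
  intro l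
  by_cases h : l = c
  · simpa [unitVec, h] using hc
  · simp [unitVec, h]

theorem sum_Icc_add_sum_Icc {M : Type*} [AddCommMonoid M] (f : ℕ → M) {u w v : ℕ}
    (huw : u ≤ w + 1) (hwv : w ≤ v) :
    ∑ l ∈ Icc u w, f l + ∑ l ∈ Icc (w + 1) v, f l = ∑ l ∈ Icc u v, f l := by
  simpa only [Ico_add_one_right_eq_Icc] using
    sum_Ico_consecutive f huw (Nat.add_le_add_right hwv 1)

theorem cast_sum_Icc_sub {f g : ℕ → ℕ} (hgf : g ≤ f) (u v : ℕ) :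
    ((∑ l ∈ Icc u v, (f - g) l : ℕ) : ℤ) =
      (∑ l ∈ Icc u v, f l : ℕ) - (∑ l ∈ Icc u v, g l : ℕ) := by
  simp only [Pi.sub_apply]
  rw [sum_tsub_distrib _ fun l _ => hgf l, Nat.cast_sub (sum_le_sum fun l _ => hgf l)]

/-- `δ` is the unit vector at the last nonzero entry of `f` in positions `≤ U`, if there is one. -/
theorem exists_le_sum_Icc_eq_min_one (f : ℕ → ℕ) (U : ℕ) :
    ∃ δ ≤ f, ∀ d V, U ≤ V → ∑ l ∈ Icc d V, δ l = min 1 (∑ l ∈ Icc d U, f l) := by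
  by_cases hf : ∃ l ≤ U, 1 ≤ f l
  · obtain ⟨l₀, hl₀, hfl₀⟩ := hf
    set c := Nat.findGreatest (fun l => 1 ≤ f l) U
    have hcU : c ≤ U := Nat.findGreatest_le U
    have hfc : 1 ≤ f c := Nat.findGreatest_spec (P := fun l => 1 ≤ f l) hl₀ hfl₀
    refine ⟨unitVec c, unitVec_le hfc, fun d V hV => ?_⟩
    rw [sum_unitVec]
    split_ifs with hdc
    · have := single_le_sum (fun l _ => Nat.zero_le (f l)) (mem_Icc.2 ⟨hdc.1, hcU⟩)
      omega
    · have hzero : ∑ l ∈ Icc d U, f l = 0 := sum_eq_zero fun l hl => by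
        have := Nat.findGreatest_is_greatest (P := fun l => 1 ≤ f l) (n := U) (k := l)
          (by grind) (mem_Icc.1 hl).2
        omega
      omega
  · push Not at hf
    refine ⟨0, fun l => Nat.zero_le _, fun d V _ => ?_⟩
    have hzero : ∑ l ∈ Icc d U, f l = 0 := sum_eq_zero fun l hl =>
      Nat.lt_one_iff.1 (hf l (mem_Icc.1 hl).2)
    simp [hzero]

theorem exists_le_sum_Icc_eq_min_one_add (f : ℕ → ℕ) {U V : ℕ} (hUV : U ≤ V) :
    ∃ δ ≤ f, ∀ d, ∑ l ∈ Icc d V, δ l =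
      min (∑ l ∈ Icc d V, f l) (1 + min 1 (∑ l ∈ Icc d U, f l)) := by
  obtain ⟨δ, hδ, hsumδ⟩ := exists_le_sum_Icc_eq_min_one f V
  obtain ⟨ε, hε, hsumε⟩ := exists_le_sum_Icc_eq_min_one (f - δ) U
  refine ⟨δ + ε, fun l => ?_, fun d => ?_⟩
  · have := hε l
    have := hδ l
    simp only [Pi.sub_apply, Pi.add_apply] at *
    omega
  · have hsub := cast_sum_Icc_sub hδ d U
    have hδd := hsumδ d V le_rfl
    have hδU := hsumδ (U + 1) V le_rfl
    simp only [Pi.add_apply, sum_add_distrib, hsumε d V hUV]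
    rcases Nat.lt_or_ge U d with hUd | hdU
    · simp only [Icc_eq_empty (show ¬ d ≤ U by omega), sum_empty] at *
      omega
    · have := sum_Icc_add_sum_Icc f (show d ≤ U + 1 by omega) hUV
      have := sum_Icc_add_sum_Icc δ (show d ≤ U + 1 by omega) hUV
      omega

/-! ### Slacks and excesses -/

/-- The slack `s_k = (m_1 + ⋯ + m_k) - (a_1 + ⋯ + a_k)` of the inequality (D1). -/
def slack (m a : ℕ → ℕ) (k : ℕ) : ℤ :=
  (∑ l ∈ Icc 1 k, m l : ℕ) - (∑ l ∈ Icc 1 k, a l : ℕ)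

/-- In rank `n = N + 2`, the quantity
`E_d = (d_d + ⋯ + d_{n-1}) - (m_d + ⋯ + m_{n-2}) + a_{n-1} + b - m_{n-1} - m_n - s_{n-2}`.
The inequalities (D5), (D6) and (D7) bound it by `b`, `a_{n-1}` and `s_k` respectively, and for
`d = n - 1` the first two become (D3) and (D4). -/
def excess (N : ℕ) (m : ℕ → ℕ) (x : (ℕ → ℕ) × ℕ × (ℕ → ℕ)) (d : ℕ) : ℤ :=
  (∑ l ∈ Icc d (N + 1), x.2.2 l : ℕ) - (∑ l ∈ Icc d N, m l : ℕ) + x.1 (N + 1) + x.2.1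
    - m (N + 1) - m (N + 2) - slack m x.1 N

/-- The inequalities (D1)–(D7) in rank `n = N + 2`, rewritten in terms of `slack` and `excess`. -/
structure IsFeasible (N : ℕ) (m : ℕ → ℕ) (x : (ℕ → ℕ) × ℕ × (ℕ → ℕ)) : Prop where
  slack_nonneg : ∀ k ≤ N, 0 ≤ slack m x.1 k
  left_le : x.1 (N + 1) ≤ slack m x.1 N + m (N + 1)
  right_le : x.2.1 ≤ slack m x.1 N + m (N + 2)
  excess_le_left : ∀ d, 2 ≤ d → d ≤ N + 1 → excess N m x d ≤ x.1 (N + 1)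
  excess_le_right : ∀ d, 2 ≤ d → d ≤ N + 1 → excess N m x d ≤ x.2.1
  excess_le_slack : ∀ d k, 2 ≤ d → d ≤ k + 1 → k ≤ N → excess N m x d ≤ slack m x.1 k

/-- The coordinates of `x` that do not occur in rank `n = N + 2` vanish. -/
def IsSupported (N : ℕ) (x : (ℕ → ℕ) × ℕ × (ℕ → ℕ)) : Prop :=
  (∀ l, (l = 0 ∨ N + 1 < l) → x.1 l = 0) ∧ ∀ l, (l ≤ 1 ∨ N + 1 < l) → x.2.2 l = 0

section

variable {N : ℕ} {m : ℕ → ℕ} {x y : (ℕ → ℕ) × ℕ × (ℕ → ℕ)}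

theorem IsSupported.mono (hx : IsSupported N x) (hyx : y ≤ x) : IsSupported N y :=
  ⟨fun l hl => Nat.le_zero.1 (hx.1 l hl ▸ hyx.1 l),
    fun l hl => Nat.le_zero.1 (hx.2 l hl ▸ hyx.2.2 l)⟩

theorem QD_eq (m : ℕ → ℕ) {d : ℕ} (hd : 1 ≤ d) (hdN : d ≤ N + 1) :
    QD (N + 2) m d =
      ∑ l ∈ Icc 1 N, m l + ∑ l ∈ Icc d N, m l + m (N + 1) + m (N + 2) := by
  have hsplit := sum_Icc_add_sum_Icc m (show 1 ≤ d - 1 + 1 by omega) (show d - 1 ≤ N by omega)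
  rw [Nat.sub_add_cancel hd] at hsplit
  simp only [QD, show N + 2 - 2 = N from rfl, show N + 2 - 1 = N + 1 from rfl]
  omega

theorem excess_top (N : ℕ) (m : ℕ → ℕ) (x : (ℕ → ℕ) × ℕ × (ℕ → ℕ)) :
    excess N m x (N + 1) = x.2.2 (N + 1) + x.1 (N + 1) + x.2.1 - m (N + 1) - m (N + 2)
      - slack m x.1 N := by
  simp [excess]

theorem isFeasible_of_mem_SD (hx : x ∈ SD (N + 2) m) : IsFeasible N m x := by
  obtain ⟨-, -, hD1, hD2, hD3, hD4, hD5, hD6, hD7⟩ := hx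
  simp only [show N + 2 - 1 = N + 1 from rfl, show N + 2 - 2 = N from rfl] at *
  have ha := sum_Icc_succ_top (show 1 ≤ N + 1 by omega) x.1
  have hm := sum_Icc_succ_top (show 1 ≤ N + 1 by omega) m
  have hm' : ∑ l ∈ Icc 1 (N + 2), m l = ∑ l ∈ Icc 1 (N + 1), m l + m (N + 2) :=
    sum_Icc_succ_top (by omega) m
  refine ⟨fun k hk => ?_, ?_, ?_, fun d hd hdN => ?_, fun d hd hdN => ?_, fun d k hd hdk hk => ?_⟩
  · rcases Nat.eq_zero_or_pos k with rfl | hk0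
    · simp [slack]
    · have := hD1 k hk0 (by omega)
      simp only [slack]; omega
  · have := hD1 (N + 1) (by omega) le_rfl
    simp only [slack]; omega
  · simp only [slack]; omega
  · rcases Nat.lt_or_ge N d with h | h
    · obtain rfl : d = N + 1 := by omega
      rw [excess_top]
      simp only [slack]; omega
    · have := hD6 d hd h
      rw [QD_eq m (by omega) hdN] at this
      simp only [excess, slack]; omega
  · rcases Nat.lt_or_ge N d with h | h
    · obtain rfl : d = N + 1 := by omega
      rw [excess_top]
      simp only [slack]; omega
    · have := hD5 d hd h
      rw [QD_eq m (by omega) hdN] at this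
      simp only [excess, slack]; omega
  · have hak := sum_Icc_add_sum_Icc x.1 (show 1 ≤ k + 1 by omega) (show k ≤ N + 1 by omega)
    have := hD7 d k hd (by omega) (by omega) hk
    rw [QD_eq m (by omega) (by omega)] at this
    simp only [excess, slack]; omega

theorem mem_SD_of_isFeasible (hN : 1 ≤ N) (hsupp : IsSupported N x) (hx : IsFeasible N m x) :
    x ∈ SD (N + 2) m := by
  have ha := sum_Icc_succ_top (show 1 ≤ N + 1 by omega) x.1
  have hm := sum_Icc_succ_top (show 1 ≤ N + 1 by omega) m
  have hm' : ∑ l ∈ Icc 1 (N + 2), m l = ∑ l ∈ Icc 1 (N + 1), m l + m (N + 2) :=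
    sum_Icc_succ_top (by omega) m
  have hleft := hx.excess_le_left (N + 1) (by omega) le_rfl
  have hright := hx.excess_le_right (N + 1) (by omega) le_rfl
  obtain ⟨hnonneg, hleft_le, hright_le, hexl, hexr, hexs⟩ := hx
  rw [excess_top] at hleft hright
  simp only [excess, slack] at *
  refine ⟨hsupp.1, hsupp.2, fun j _ hj => ?_, ?_, ?_, ?_, fun d hd hdN => ?_, fun d hd hdN => ?_,
    fun d k hd hdN hdk hk => ?_⟩ <;>
  simp only [show N + 2 - 1 = N + 1 from rfl, show N + 2 - 2 = N from rfl] at *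
  · rcases Nat.lt_or_ge N j with h | h
    · obtain rfl : j = N + 1 := by omega
      omega
    · have := hnonneg j h
      omega
  · omega
  · omega
  · omega
  · have := hexr d hd (by omega)
    rw [QD_eq m (by omega) (by omega)]; omega
  · have := hexl d hd (by omega)
    rw [QD_eq m (by omega) (by omega)]; omega
  · have hak := sum_Icc_add_sum_Icc x.1 (show 1 ≤ k + 1 by omega) (show k ≤ N + 1 by omega)
    have := hexs d k hd (by omega) hk
    rw [QD_eq m (by omega) (by omega)]; omega

theorem slack_sub {e a a' : ℕ → ℕ} (he : e ≤ m) (ha : a' ≤ a) (k : ℕ) :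
    slack (m - e) (a - a') k = slack m a k - slack e a' k := by
  simp only [slack, cast_sum_Icc_sub he, cast_sum_Icc_sub ha]
  ring

theorem excess_sub {e : ℕ → ℕ} (he : e ≤ m) (hyx : y ≤ x) (d : ℕ) :
    excess N (m - e) (x - y) d = excess N m x d - excess N e y d := by
  simp only [excess, Prod.fst_sub, Prod.snd_sub, slack_sub he hyx.1, cast_sum_Icc_sub he,
    cast_sum_Icc_sub hyx.2.2]
  simp only [Pi.sub_apply, Nat.cast_sub (he _), Nat.cast_sub (hyx.1 _), Nat.cast_sub hyx.2.1]
  ring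

theorem slack_add_sum_eq (m a : ℕ → ℕ) {k v : ℕ} (hkv : k ≤ v) :
    slack m a v + (∑ l ∈ Icc (k + 1) v, a l : ℕ) =
      slack m a k + (∑ l ∈ Icc (k + 1) v, m l : ℕ) := by
  have := sum_Icc_add_sum_Icc m (show 1 ≤ k + 1 by omega) hkv
  have := sum_Icc_add_sum_Icc a (show 1 ≤ k + 1 by omega) hkv
  simp only [slack]
  omega

theorem excess_add_sum_eq (N : ℕ) (m : ℕ → ℕ) (x : (ℕ → ℕ) × ℕ × (ℕ → ℕ)) {d v : ℕ}
    (hdv : d ≤ v + 1) (hvN : v ≤ N) :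
    excess N m x d + (∑ l ∈ Icc d v, m l : ℕ) =
      excess N m x (v + 1) + (∑ l ∈ Icc d v, x.2.2 l : ℕ) := by
  have := sum_Icc_add_sum_Icc m hdv hvN
  have := sum_Icc_add_sum_Icc x.2.2 hdv (show v ≤ N + 1 by omega)
  simp only [excess]
  omega

theorem excess_add_slack_le (N : ℕ) (m : ℕ → ℕ) (x : (ℕ → ℕ) × ℕ × (ℕ → ℕ))
    {d k v : ℕ} (hdk : d ≤ k + 1) (hkv : k ≤ v) (hvN : v ≤ N) :
    excess N m x d + slack m x.1 v + (∑ l ∈ Icc (k + 1) v, x.1 l : ℕ) ≤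
      excess N m x (v + 1) + slack m x.1 k + (∑ l ∈ Icc d v, x.2.2 l : ℕ) := by
  have := excess_add_sum_eq N m x (show d ≤ v + 1 by omega) hvN
  have := slack_add_sum_eq m x.1 hkv
  have := sum_Icc_add_sum_Icc m hdk hkv
  omega

theorem slack_sub_one_lt_slack {a : ℕ → ℕ} {i k : ℕ} (hi : 1 ≤ i) (hik : i ≤ k) (hmi : 1 ≤ m i)
    (ha : ∀ l, i ≤ l → l ≤ k → a l = 0) : slack m a (i - 1) < slack m a k := by
  have hsum := slack_add_sum_eq m a (show i - 1 ≤ k by omega)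
  rw [Nat.sub_add_cancel hi, sum_eq_zero fun l hl => ha l (mem_Icc.1 hl).1 (mem_Icc.1 hl).2] at hsum
  have := single_le_sum (fun l _ => Nat.zero_le (m l)) (mem_Icc.2 ⟨le_refl i, hik⟩)
  omega

theorem excess_lt_excess {d i : ℕ} (hdi : d ≤ i) (hiN : i ≤ N) (hmi : 1 ≤ m i)
    (hd : ∑ l ∈ Icc d i, x.2.2 l = 0) : excess N m x d < excess N m x (i + 1) := by
  have := excess_add_sum_eq N m x (show d ≤ i + 1 by omega) hiN
  have := single_le_sum (fun l _ => Nat.zero_le (m l)) (mem_Icc.2 ⟨hdi, le_refl i⟩)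
  omega

theorem IsFeasible.excess_lt_slack (hx : IsFeasible N m x) {d k i : ℕ} (hi : 1 ≤ i) (hdi : d ≤ i)
    (hiN : i ≤ N) (hmi : 1 ≤ m i) (hd : ∑ l ∈ Icc d i, x.2.2 l = 0)
    (hlt : excess N m x (i + 1) < slack m x.1 i + x.1 i) (hdk : d ≤ k + 1) (hkN : k ≤ N) :
    excess N m x d < slack m x.1 k := by
  rcases Nat.lt_or_ge k i with hki | hik
  · have := excess_add_slack_le N m x hdk hki.le hiN
    have := single_le_sum (fun l _ => Nat.zero_le (x.1 l))
      (mem_Icc.2 ⟨show k + 1 ≤ i from hki, le_refl i⟩)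
    omega
  · have := excess_lt_excess hdi hiN hmi hd
    have := hx.excess_le_slack (i + 1) k (by omega) (by omega) hkN
    omega

theorem slack_unitVec {i : ℕ} (hi : 1 ≤ i) (a : ℕ → ℕ) (k : ℕ) :
    slack (unitVec i) a k = (if i ≤ k then 1 else 0) - (∑ l ∈ Icc 1 k, a l : ℕ) := by
  simp [slack, sum_unitVec, hi]

theorem excess_unitVec {i : ℕ} (hi : 1 ≤ i) (hiN : i ≤ N + 2) (y : (ℕ → ℕ) × ℕ × (ℕ → ℕ)) (d : ℕ) :
    excess N (unitVec i) y d = (∑ l ∈ Icc d (N + 1), y.2.2 l : ℕ)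
      + (∑ l ∈ Icc 1 (N + 1), y.1 l : ℕ) + y.2.1 - 1 - (if d ≤ i ∧ i ≤ N then 1 else 0) := by
  have := sum_Icc_succ_top (show 1 ≤ N + 1 by omega) y.1
  simp only [excess, slack_unitVec hi, sum_unitVec]
  simp only [unitVec]
  split_ifs <;> omega

theorem isFeasible_sub {e : ℕ → ℕ} (he : e ≤ m) (hyx : y ≤ x)
    (hnonneg : ∀ k ≤ N, slack e y.1 k ≤ slack m x.1 k)
    (hleft : slack e y.1 N + e (N + 1) - y.1 (N + 1) ≤ slack m x.1 N + m (N + 1) - x.1 (N + 1))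
    (hright : slack e y.1 N + e (N + 2) - y.2.1 ≤ slack m x.1 N + m (N + 2) - x.2.1)
    (hexl : ∀ d, 2 ≤ d → d ≤ N + 1 →
      y.1 (N + 1) - excess N e y d ≤ x.1 (N + 1) - excess N m x d)
    (hexr : ∀ d, 2 ≤ d → d ≤ N + 1 → y.2.1 - excess N e y d ≤ x.2.1 - excess N m x d)
    (hexs : ∀ d k, 2 ≤ d → d ≤ k + 1 → k ≤ N →
      slack e y.1 k - excess N e y d ≤ slack m x.1 k - excess N m x d) :
    IsFeasible N (m - e) (x - y) := by
  have : e (N + 1) ≤ m (N + 1) := he (N + 1)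
  have : e (N + 2) ≤ m (N + 2) := he (N + 2)
  have : y.1 (N + 1) ≤ x.1 (N + 1) := hyx.1 (N + 1)
  have : y.2.1 ≤ x.2.1 := hyx.2.1
  constructor
  all_goals
    simp only [excess_sub he hyx, Prod.fst_sub, Prod.snd_sub, slack_sub he hyx.1, Pi.sub_apply]
  · intro k hk
    have := hnonneg k hk
    omega
  · omega
  · omega
  · intro d hd hdN
    have := hexl d hd hdN
    omega
  · intro d hd hdN
    have := hexr d hd hdN
    omega
  · intro d k hd hdk hk
    have := hexs d k hd hdk hk
    omega

/-! ### Summands with one unit in both spin coordinates -/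

theorem slack_unitVec_unitVec {i k : ℕ} (hi : 1 ≤ i) (hk : k ≤ N) :
    slack (unitVec i) (unitVec (N + 1)) k = if i ≤ k then 1 else 0 := by
  rw [slack_unitVec hi, sum_unitVec, if_neg (show ¬ (1 ≤ N + 1 ∧ N + 1 ≤ k) by omega),
    Nat.cast_zero, sub_zero]

theorem excess_unitVec_unitVec_one {i : ℕ} (hi : 1 ≤ i) (hiN : i ≤ N) (d : ℕ) :
    excess N (unitVec i) (unitVec (N + 1), 1, 0) d = if d ≤ i then 0 else 1 := by
  simp only [excess_unitVec hi (show i ≤ N + 2 by omega), sum_unitVec, Pi.zero_apply,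
    sum_const_zero]
  split_ifs <;> omega

theorem isFeasible_unitVec_one {i : ℕ} (hi : 1 ≤ i) (hiN : i ≤ N) :
    IsFeasible N (unitVec i) (unitVec (N + 1), 1, 0) := by
  constructor
  case excess_le_slack =>
    intro d k _ hdk hk
    rw [excess_unitVec_unitVec_one hi hiN, slack_unitVec_unitVec hi hk]
    split_ifs <;> omega
  all_goals
    intros
    simp only [excess_unitVec_unitVec_one hi hiN, slack_unitVec_unitVec hi, le_refl, unitVec, *]
    split_ifs <;> omega

/-- `x` splits as `y + (x - y)` with `y` satisfying the inequalities for `e_i` and `x - y` those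
for `m - e_i`. -/
def HasUnitSummand (N : ℕ) (m : ℕ → ℕ) (i : ℕ) (x : (ℕ → ℕ) × ℕ × (ℕ → ℕ)) : Prop :=
  ∃ y ≤ x, IsFeasible N (unitVec i) y ∧ IsFeasible N (m - unitVec i) (x - y)

theorem IsFeasible.hasUnitSummand_of_slack_sub_one_lt (hx : IsFeasible N m x) {i : ℕ} (hi : 1 ≤ i)
    (hiN : i ≤ N) (hmi : 1 ≤ m i)
    (hlt : ∀ k, i ≤ k → k ≤ N → slack m x.1 (i - 1) < slack m x.1 k)
    (hleft : slack m x.1 (i - 1) < x.1 (N + 1)) (hright : slack m x.1 (i - 1) < x.2.1) :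
    HasUnitSummand N m i x := by
  have hnonneg := hx.slack_nonneg (i - 1) (by omega)
  have hcap : ∀ d ≤ i, 2 ≤ d → excess N m x d ≤ slack m x.1 (i - 1) := fun d hdi hd =>
    hx.excess_le_slack d (i - 1) hd (by omega) (by omega)
  have hyx : (unitVec (N + 1), 1, 0) ≤ x :=
    ⟨unitVec_le (by omega), by simp only; omega, fun l => Nat.zero_le _⟩
  refine ⟨_, hyx, isFeasible_unitVec_one hi hiN, isFeasible_sub (unitVec_le hmi) hyx
    (fun k hk => ?_) ?_ ?_ (fun d hd hdN => ?_) (fun d hd hdN => ?_) (fun d k hd hdk hk => ?_)⟩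
  · have := hx.slack_nonneg k hk
    have := hlt k
    rw [slack_unitVec_unitVec hi hk]
    split_ifs <;> omega
  · have := hx.left_le
    simp only [slack_unitVec_unitVec hi le_rfl, unitVec]
    split_ifs <;> omega
  · have := hx.right_le
    simp only [slack_unitVec_unitVec hi le_rfl, unitVec]
    split_ifs <;> omega
  · have := hx.excess_le_left d hd hdN
    have := hcap d
    simp only [excess_unitVec_unitVec_one hi hiN, unitVec, ↓reduceIte]
    split_ifs <;> omega
  · have := hx.excess_le_right d hd hdN
    have := hcap d
    simp only [excess_unitVec_unitVec_one hi hiN]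
    split_ifs <;> omega
  · have := hx.excess_le_slack d k hd hdk hk
    have := hcap d
    have := hlt k
    simp only [excess_unitVec_unitVec_one hi hiN, slack_unitVec_unitVec hi hk]
    split_ifs <;> omega

theorem IsFeasible.hasUnitSummand_of_excess_eq_slack (hx : IsFeasible N m x) {i j d k : ℕ}
    (hi : 1 ≤ i) (hmi : 1 ≤ m i) (hfree : ∀ l, i ≤ l → l < j → x.1 l = 0) (hid : i < d)
    (hdk : d ≤ k + 1) (hkj : k < j) (hkN : k ≤ N) (htight : excess N m x d = slack m x.1 k) :
    HasUnitSummand N m i x := by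
  have hltk := slack_sub_one_lt_slack hi (show i ≤ k by omega) hmi
    fun l hil hlk => hfree l hil (by omega)
  have hlt : ∀ l, i ≤ l → l ≤ N → slack m x.1 (i - 1) < slack m x.1 l := by
    intro l hil hlN
    rcases Nat.lt_or_ge l j with hlj | hjl
    · exact slack_sub_one_lt_slack hi hil hmi fun t hit htl => hfree t hit (by omega)
    · have := hx.excess_le_slack d l (by omega) (by omega) hlN
      omega
  have hleft := hx.excess_le_left d (by omega) (by omega)
  have hright := hx.excess_le_right d (by omega) (by omega)
  exact hx.hasUnitSummand_of_slack_sub_one_lt hi (by omega) hmi hlt (by omega) (by omega)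

/-! ### Summands with one unbarred unit -/

/-- The point whose only nonzero unbarred coordinate is `a_j = 1`, with `b` counted as `a_n`, and
whose barred coordinates are given by `δ`. -/
def singlePoint (N j : ℕ) (δ : ℕ → ℕ) : (ℕ → ℕ) × ℕ × (ℕ → ℕ) :=
  (fun l => if l ≤ N + 1 then unitVec j l else 0, unitVec j (N + 2), δ)

theorem singlePoint_le {j : ℕ} {δ : ℕ → ℕ} (hleft : j ≤ N + 1 → 1 ≤ x.1 j)
    (hright : j = N + 2 → 1 ≤ x.2.1) (hδ : δ ≤ x.2.2) : singlePoint N j δ ≤ x := by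
  refine ⟨fun l => ?_, ?_, hδ⟩
  · simp only [singlePoint, unitVec]
    grind
  · simp only [singlePoint, unitVec]
    grind

theorem slack_singlePoint {i j k : ℕ} (hi : 1 ≤ i) (hij : i ≤ j) (hk : k ≤ N) (δ : ℕ → ℕ) :
    slack (unitVec i) (singlePoint N j δ).1 k = if i ≤ k ∧ k < j then 1 else 0 := by
  have hsum : ∑ l ∈ Icc 1 k, (singlePoint N j δ).1 l = ∑ l ∈ Icc 1 k, unitVec j l :=
    sum_congr rfl fun l hl => if_pos (by grind)
  rw [slack_unitVec hi, hsum, sum_unitVec]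
  split_ifs <;> omega

theorem excess_singlePoint {i j d : ℕ} (hi : 1 ≤ i) (hij : i ≤ j) (hjN : j ≤ N + 2)
    (δ : ℕ → ℕ) : excess N (unitVec i) (singlePoint N j δ) d =
      (∑ l ∈ Icc d (N + 1), δ l : ℕ) - (if d ≤ i ∧ i ≤ N then 1 else 0) := by
  have hsum : ∑ l ∈ Icc 1 (N + 1), (singlePoint N j δ).1 l = ∑ l ∈ Icc 1 (N + 1), unitVec j l :=
    sum_congr rfl fun l hl => if_pos (by grind)
  rw [excess_unitVec hi (hij.trans hjN), hsum, sum_unitVec]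
  simp only [singlePoint, unitVec]
  split_ifs <;> omega

theorem isFeasible_singlePoint {i j : ℕ} {δ : ℕ → ℕ} (hi : 1 ≤ i) (hij : i ≤ j)
    (hspin : i ≤ N ∨ i = j)
    (hexcess : ∀ d, excess N (unitVec i) (singlePoint N j δ) d ≤ 0) :
    IsFeasible N (unitVec i) (singlePoint N j δ) := by
  have hslack : ∀ k ≤ N, 0 ≤ slack (unitVec i) (singlePoint N j δ).1 k := fun k hk => by
    rw [slack_singlePoint hi hij hk]
    split_ifs <;> omega
  refine ⟨hslack, ?_, ?_, fun d _ _ => (hexcess d).trans (Int.natCast_nonneg _),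
    fun d _ _ => (hexcess d).trans (Int.natCast_nonneg _),
    fun d k _ _ hk => (hexcess d).trans (hslack k hk)⟩
  all_goals
    rw [slack_singlePoint hi hij le_rfl]
    simp only [singlePoint, unitVec]
    split_ifs <;> omega

theorem exists_excess_singlePoint_eq {i j : ℕ} (hi : 1 ≤ i) (hiN : i ≤ N) (hij : i ≤ j)
    (hjN : j ≤ N + 2) (f : ℕ → ℕ) :
    ∃ δ ≤ f, ∀ d, excess N (unitVec i) (singlePoint N j δ) d =
      -if d ≤ i ∧ ∑ l ∈ Icc d i, f l = 0 then 1 else 0 := by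
  obtain ⟨δ, hδ, hsum⟩ := exists_le_sum_Icc_eq_min_one f i
  refine ⟨δ, hδ, fun d => ?_⟩
  rw [excess_singlePoint hi hij hjN, hsum d (N + 1) (by omega)]
  by_cases hdi : d ≤ i
  · split_ifs <;> omega
  · simp [hdi, Icc_eq_empty hdi]

theorem IsFeasible.hasUnitSummand_of_saturated (hx : IsFeasible N m x) {i : ℕ} (hmi : 1 ≤ m i)
    (hsat : (i = N + 1 ∧ (x.1 (N + 1) : ℤ) = slack m x.1 N + m (N + 1)) ∨
      (i = N + 2 ∧ (x.2.1 : ℤ) = slack m x.1 N + m (N + 2))) : HasUnitSummand N m i x := by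
  have hnonneg := hx.slack_nonneg N le_rfl
  have hi : 1 ≤ i := by omega
  have hyx : singlePoint N i 0 ≤ x := singlePoint_le (by grind) (by grind) fun l => Nat.zero_le _
  have hslack : ∀ k ≤ N, slack (unitVec i) (singlePoint N i 0).1 k = 0 := fun k hk => by
    simp [slack_singlePoint hi le_rfl hk]
  have hexcess : ∀ d, excess N (unitVec i) (singlePoint N i 0) d = 0 := fun d => by
    simp [excess_singlePoint hi le_rfl (show i ≤ N + 2 by omega), show ¬ i ≤ N by omega]
  refine ⟨_, hyx, isFeasible_singlePoint hi le_rfl (Or.inr rfl) fun d => (hexcess d).le,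
    isFeasible_sub (unitVec_le hmi) hyx (fun k hk => ?_) ?_ ?_
    (fun d hd hdN => ?_) (fun d hd hdN => ?_) (fun d k hd hdk hk => ?_)⟩
  · simpa only [hslack k hk] using hx.slack_nonneg k hk
  · have := hx.left_le
    rw [hslack N le_rfl]
    simp only [singlePoint, le_refl, ↓reduceIte]
    omega
  · have := hx.right_le
    rw [hslack N le_rfl]
    simp only [singlePoint]
    omega
  · have := hx.excess_le_left d hd hdN
    have := hx.excess_le_slack d N hd hdN le_rfl
    rw [hexcess d]
    simp only [singlePoint, unitVec]
    rcases hsat with ⟨rfl, _⟩ | ⟨rfl, _⟩ <;> split_ifs <;> omega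
  · have := hx.excess_le_right d hd hdN
    have := hx.excess_le_slack d N hd hdN le_rfl
    rw [hexcess d]
    simp only [singlePoint, unitVec]
    rcases hsat with ⟨rfl, _⟩ | ⟨rfl, _⟩ <;> split_ifs <;> omega
  · have := hx.excess_le_slack d k hd hdk hk
    simp only [hexcess, hslack k hk]
    omega

theorem IsFeasible.excess_add_le_slack (hx : IsFeasible N m x) {i j d k : ℕ} (hi : 1 ≤ i)
    (hiN : i ≤ N) (hij : i ≤ j) (hmi : 1 ≤ m i)
    (hfree : ∀ l, i ≤ l → l < j → l ≤ N → x.1 l = 0)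
    (hloose : ∀ d k, i < d → d ≤ k + 1 → k < j → k ≤ N → excess N m x d < slack m x.1 k)
    (hj : j ≤ N → 1 ≤ x.1 j) (hd : 2 ≤ d) (hdk : d ≤ k + 1) (hk : k ≤ N) :
    excess N m x d + (if i ≤ k ∧ k < j then 1 else 0) +
      (if d ≤ i ∧ ∑ l ∈ Icc d i, x.2.2 l = 0 then 1 else 0) ≤ slack m x.1 k := by
  have hpos : i ≤ k → k < j → slack m x.1 (i - 1) < slack m x.1 k := fun hik hkj =>
    slack_sub_one_lt_slack hi hik hmi fun l hil hlk => hfree l hil (by omega) (by omega)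
  have hcap : d ≤ i → excess N m x d ≤ slack m x.1 (i - 1) := fun hdi =>
    hx.excess_le_slack d (i - 1) hd (by omega) (by omega)
  have hlt : excess N m x (i + 1) < slack m x.1 i + x.1 i := by
    rcases hij.eq_or_lt with rfl | hij
    · have := hx.excess_le_slack (i + 1) i (by omega) le_rfl hiN
      omega
    · have := hloose (i + 1) i (by omega) le_rfl hij hiN
      omega
  have hle := hx.excess_le_slack d k hd hdk hk
  split_ifs with hkj hdi hdi
  · have := excess_lt_excess hdi.1 hiN hmi hdi.2
    have := hloose (i + 1) k (by omega) (by omega) hkj.2 hk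
    omega
  · rcases Nat.lt_or_ge i d with hid | hdi
    · have := hloose d k hid hdk hkj.2 hk
      omega
    · have := hcap hdi
      have := hpos hkj.1 hkj.2
      omega
  · have := hx.excess_lt_slack hi hdi.1 hiN hmi hdi.2 hlt hdk hk
    omega
  · omega

theorem excess_add_ite_le {i d : ℕ} {c : ℤ} (hiN : i ≤ N) (hmi : 1 ≤ m i)
    (hd : excess N m x d ≤ c) (hi : excess N m x (i + 1) ≤ c) :
    excess N m x d + (if d ≤ i ∧ ∑ l ∈ Icc d i, x.2.2 l = 0 then 1 else 0) ≤ c := by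
  split_ifs with h
  · have := excess_lt_excess h.1 hiN hmi h.2
    omega
  · omega

theorem IsFeasible.ite_le_slack (hx : IsFeasible N m x) {i j k : ℕ} (hi : 1 ≤ i) (hmi : 1 ≤ m i)
    (hfree : ∀ l, i ≤ l → l < j → l ≤ N → x.1 l = 0) (hk : k ≤ N) :
    (if i ≤ k ∧ k < j then 1 else 0) ≤ slack m x.1 k := by
  split_ifs with hik
  · have := hx.slack_nonneg (i - 1) (by omega)
    have := slack_sub_one_lt_slack hi hik.1 hmi fun l hil hlk =>
      hfree l hil (by omega) (hlk.trans hk)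
    omega
  · exact hx.slack_nonneg k hk

theorem IsFeasible.hasUnitSummand_of_excess_lt_slack (hx : IsFeasible N m x) {i j : ℕ} (hi : 1 ≤ i)
    (hiN : i ≤ N) (hij : i ≤ j) (hmi : 1 ≤ m i)
    (hfree : ∀ l, i ≤ l → l < j → l ≤ N → x.1 l = 0)
    (hloose : ∀ d k, i < d → d ≤ k + 1 → k < j → k ≤ N → excess N m x d < slack m x.1 k)
    (hj : (j ≤ N ∧ 1 ≤ x.1 j) ∨ (j = N + 1 ∧ (x.1 (N + 1) : ℤ) = slack m x.1 N + m (N + 1)) ∨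
      (j = N + 2 ∧ (x.2.1 : ℤ) = slack m x.1 N + m (N + 2))) : HasUnitSummand N m i x := by
  have hmargin := fun d k => hx.excess_add_le_slack (d := d) (k := k) hi hiN hij hmi hfree hloose
    (by omega)
  have hposN := hx.ite_le_slack hi hmi hfree le_rfl
  obtain ⟨δ, hδ, hexcess⟩ := exists_excess_singlePoint_eq hi hiN hij (show j ≤ N + 2 by omega) x.2.2
  have hslack := fun k hk => slack_singlePoint (N := N) (k := k) hi hij hk δ
  have hyx : singlePoint N j δ ≤ x := singlePoint_le (by grind) (by grind) hδ
  have hyfeas : IsFeasible N (unitVec i) (singlePoint N j δ) :=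
    isFeasible_singlePoint hi hij (Or.inl hiN) fun d => by
      rw [hexcess]
      split_ifs <;> simp
  have hexcess_top : N < j → excess N m x (N + 1) < slack m x.1 N := fun hNj =>
    hloose (N + 1) N (by omega) le_rfl hNj le_rfl
  rw [excess_top] at hexcess_top
  refine ⟨_, hyx, hyfeas, isFeasible_sub (unitVec_le hmi) hyx (fun k hk => ?_) ?_ ?_
    (fun d hd hdN => ?_) (fun d hd hdN => ?_) (fun d k hd hdk hk => ?_)⟩
  · rw [hslack k hk]
    exact hx.ite_le_slack hi hmi hfree hk
  · have := hx.left_le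
    rw [hslack N le_rfl]
    simp only [singlePoint, unitVec]
    split_ifs <;> omega
  · have := hx.right_le
    rw [hslack N le_rfl]
    simp only [singlePoint, unitVec]
    split_ifs <;> omega
  · have := excess_add_ite_le hiN hmi (hx.excess_le_left d hd hdN)
      (hx.excess_le_left (i + 1) (by omega) (by omega))
    have := hmargin d N hd hdN le_rfl
    rw [hexcess]
    simp only [singlePoint, unitVec]
    split_ifs at * <;> omega
  · have := excess_add_ite_le hiN hmi (hx.excess_le_right d hd hdN)
      (hx.excess_le_right (i + 1) (by omega) (by omega))
    have := hmargin d N hd hdN le_rfl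
    rw [hexcess]
    simp only [singlePoint, unitVec]
    split_ifs at * <;> omega
  · have := hmargin d k hd hdk hk
    rw [hexcess, hslack k hk]
    omega

/-! ### Summands with barred units only -/

theorem excess_add_add_le (N : ℕ) (m : ℕ → ℕ) (x : (ℕ → ℕ) × ℕ × (ℕ → ℕ)) {d k : ℕ}
    (hdk : d ≤ k + 1) (hkN : k ≤ N) :
    excess N m x d + (slack m x.1 N + m (N + 1) - x.1 (N + 1)) +
      (slack m x.1 N + m (N + 2) - x.2.1) ≤
        slack m x.1 k + (∑ l ∈ Icc d (N + 1), x.2.2 l : ℕ) := by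
  have := slack_add_sum_eq m x.1 hkN
  have := sum_Icc_add_sum_Icc m hdk hkN
  simp only [excess]
  omega

theorem slack_unitVec_zero {i : ℕ} (hi : 1 ≤ i) (k : ℕ) :
    slack (unitVec i) 0 k = if i ≤ k then 1 else 0 := by
  simp [slack_unitVec hi]

theorem excess_unitVec_barred {i : ℕ} (hi : 1 ≤ i) (hiN : i ≤ N + 2) (δ : ℕ → ℕ) (d : ℕ) :
    excess N (unitVec i) (0, 0, δ) d =
      (∑ l ∈ Icc d (N + 1), δ l : ℕ) - 1 - (if d ≤ i ∧ i ≤ N then 1 else 0) := by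
  simp [excess_unitVec hi hiN]

theorem isFeasible_unitVec_barred {i : ℕ} {δ : ℕ → ℕ} (hi : 1 ≤ i)
    (hexcess : ∀ d, excess N (unitVec i) (0, 0, δ) d ≤ 0) :
    IsFeasible N (unitVec i) (0, 0, δ) := by
  have hslack : ∀ k, 0 ≤ slack (unitVec i) 0 k := fun k => by
    rw [slack_unitVec_zero hi]
    split_ifs <;> simp
  exact ⟨fun k _ => hslack k, add_nonneg (hslack N) (Int.natCast_nonneg _),
    add_nonneg (hslack N) (Int.natCast_nonneg _), fun d _ _ => hexcess d, fun d _ _ => hexcess d,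
    fun d k _ _ _ => (hexcess d).trans (hslack k)⟩

theorem IsFeasible.hasUnitSummand_of_not_saturated (hx : IsFeasible N m x) {i : ℕ}
    (hmi : 1 ≤ m i)
    (hi : (i = N + 1 ∧ (x.1 (N + 1) : ℤ) < slack m x.1 N + m (N + 1)) ∨
      (i = N + 2 ∧ (x.2.1 : ℤ) < slack m x.1 N + m (N + 2))) : HasUnitSummand N m i x := by
  have hi1 : 1 ≤ i := by omega
  have hleft := hx.left_le
  have hright := hx.right_le
  obtain ⟨δ, hδ, hsum⟩ := exists_le_sum_Icc_eq_min_one x.2.2 (N + 1)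
  have hyx : ((0, 0, δ) : (ℕ → ℕ) × ℕ × (ℕ → ℕ)) ≤ x :=
    ⟨fun l => Nat.zero_le _, Nat.zero_le _, hδ⟩
  have hslack : ∀ k ≤ N, slack (unitVec i) 0 k = 0 := fun k hk => by
    rw [slack_unitVec_zero hi1, if_neg (by omega)]
  have hexcess : ∀ d, excess N (unitVec i) (0, 0, δ) d =
      (min 1 (∑ l ∈ Icc d (N + 1), x.2.2 l) : ℕ) - 1 := fun d => by
    rw [excess_unitVec_barred hi1 (by omega), hsum d (N + 1) le_rfl, if_neg (by omega), sub_zero]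
  have hyfeas : IsFeasible N (unitVec i) (0, 0, δ) := isFeasible_unitVec_barred hi1 fun d => by
    rw [hexcess]
    omega
  refine ⟨_, hyx, hyfeas, isFeasible_sub (unitVec_le hmi) hyx (fun k hk => ?_) ?_ ?_
    (fun d hd hdN => ?_) (fun d hd hdN => ?_) (fun d k hd hdk hk => ?_)⟩
  · rw [hslack k hk]
    exact hx.slack_nonneg k hk
  · rw [hslack N le_rfl]
    simp only [unitVec, Pi.zero_apply]
    split_ifs <;> omega
  · rw [hslack N le_rfl]
    simp only [unitVec]
    split_ifs <;> omega
  · have := hx.excess_le_left d hd hdN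
    rw [hexcess]
    simp only [Pi.zero_apply]
    simp only [excess] at *
    rcases hi with ⟨rfl, _⟩ | ⟨rfl, _⟩ <;> omega
  · have := hx.excess_le_right d hd hdN
    rw [hexcess]
    simp only [excess] at *
    rcases hi with ⟨rfl, _⟩ | ⟨rfl, _⟩ <;> omega
  · have := hx.excess_le_slack d k hd hdk hk
    have := excess_add_add_le N m x hdk hk
    rw [hexcess, hslack k hk]
    omega

/-- The value of `-E_d` at the point of `S_D(e_i)`, `i ≤ n - 2`, whose only nonzero coordinates are
barred ones chosen below `f`: the last one available and, after removing it, the last one at a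
position `≤ i`. -/
def barredDeficit (N i : ℕ) (f : ℕ → ℕ) (d : ℕ) : ℤ :=
  if d ≤ i then
    2 - (min (∑ l ∈ Icc d (N + 1), f l) (1 + min 1 (∑ l ∈ Icc d i, f l)) : ℕ)
  else 1 - (min 1 (∑ l ∈ Icc d (N + 1), f l) : ℕ)

theorem barredDeficit_nonneg (N i : ℕ) (f : ℕ → ℕ) (d : ℕ) : 0 ≤ barredDeficit N i f d := by
  simp only [barredDeficit]
  split_ifs <;> omega

theorem exists_excess_unitVec_barred_eq {i : ℕ} (hi : 1 ≤ i) (hiN : i ≤ N) (f : ℕ → ℕ) :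
    ∃ δ ≤ f, ∀ d, excess N (unitVec i) (0, 0, δ) d = -barredDeficit N i f d := by
  obtain ⟨δ, hδ, hsum⟩ := exists_le_sum_Icc_eq_min_one_add f (show i ≤ N + 1 by omega)
  refine ⟨δ, hδ, fun d => ?_⟩
  rw [excess_unitVec_barred hi (by omega), hsum d, barredDeficit]
  by_cases hdi : d ≤ i
  · rw [if_pos hdi, if_pos ⟨hdi, hiN⟩]
    omega
  · rw [if_neg hdi, if_neg fun h => hdi h.1, Icc_eq_empty hdi, sum_empty]
    omega

theorem excess_add_barredDeficit_le {i d : ℕ} {c : ℤ} (hiN : i ≤ N) (hmi : 1 ≤ m i)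
    (hd : excess N m x d ≤ c) (hi : excess N m x (i + 1) ≤ c)
    (hlt : excess N m x d + (∑ l ∈ Icc d N, m l : ℕ) < c + (∑ l ∈ Icc d (N + 1), x.2.2 l : ℕ)) :
    excess N m x d + barredDeficit N i x.2.2 d ≤ c := by
  simp only [barredDeficit]
  split_ifs with hdi
  · have := single_le_sum (fun l _ => Nat.zero_le (m l)) (mem_Icc.2 ⟨hdi, hiN⟩)
    have := fun h => excess_lt_excess (x := x) hdi hiN hmi h
    omega
  · omega

theorem IsFeasible.excess_add_barredDeficit_le_slack (hx : IsFeasible N m x) {i d k : ℕ}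
    (hiN : i ≤ N) (hmi : 1 ≤ m i) (hlt : excess N m x (i + 1) < slack m x.1 i)
    (hleft : (x.1 (N + 1) : ℤ) < slack m x.1 N + m (N + 1))
    (hright : (x.2.1 : ℤ) < slack m x.1 N + m (N + 2)) (hd : 2 ≤ d) (hdi : d ≤ i)
    (hdk : d ≤ k + 1) (hk : k ≤ N) :
    excess N m x d + barredDeficit N i x.2.2 d ≤ slack m x.1 k := by
  have := excess_add_add_le N m x hdk hk
  have := hx.excess_le_slack d k hd hdk hk
  have := fun h => hx.excess_lt_slack (by omega) hdi hiN hmi h (hlt.trans_le (by omega)) hdk hk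
  rw [barredDeficit, if_pos hdi]
  omega

theorem IsFeasible.excess_add_barredDeficit_le_slack_sub (hx : IsFeasible N m x) {i d k : ℕ}
    (hi : 1 ≤ i) (hiN : i ≤ N) (hmi : 1 ≤ m i) (hfree : ∀ l, i ≤ l → l ≤ N → x.1 l = 0)
    (hloose : ∀ d k, i < d → d ≤ k + 1 → k ≤ N → excess N m x d < slack m x.1 k)
    (hleft : (x.1 (N + 1) : ℤ) < slack m x.1 N + m (N + 1))
    (hright : (x.2.1 : ℤ) < slack m x.1 N + m (N + 2)) (hd : 2 ≤ d) (hdk : d ≤ k + 1)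
    (hk : k ≤ N) :
    excess N m x d + barredDeficit N i x.2.2 d ≤ slack m x.1 k - if i ≤ k then 1 else 0 := by
  rcases Nat.lt_or_ge i d with hid | hdi
  · have := excess_add_add_le N m x hdk hk
    have := hloose d k hid hdk hk
    simp only [barredDeficit]
    split_ifs <;> omega
  have hgap := fun k => hx.excess_add_barredDeficit_le_slack (k := k) hiN hmi
    (hloose (i + 1) i (by omega) le_rfl hiN) hleft hright hd hdi
  split_ifs with hik
  · have := hgap (i - 1) (by omega) (by omega)
    have := slack_sub_one_lt_slack hi hik hmi fun l hil hlk => hfree l hil (by omega)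
    omega
  · simpa only [sub_zero] using hgap k hdk hk

theorem IsFeasible.hasUnitSummand_of_forall_eq_zero (hx : IsFeasible N m x) {i : ℕ} (hi : 1 ≤ i)
    (hiN : i ≤ N) (hmi : 1 ≤ m i) (hfree : ∀ l, i ≤ l → l ≤ N → x.1 l = 0)
    (hloose : ∀ d k, i < d → d ≤ k + 1 → k ≤ N → excess N m x d < slack m x.1 k)
    (hleft : (x.1 (N + 1) : ℤ) < slack m x.1 N + m (N + 1))
    (hright : (x.2.1 : ℤ) < slack m x.1 N + m (N + 2)) : HasUnitSummand N m i x := by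
  obtain ⟨δ, hδ, hexcess⟩ := exists_excess_unitVec_barred_eq hi hiN x.2.2
  have hyx : ((0, 0, δ) : (ℕ → ℕ) × ℕ × (ℕ → ℕ)) ≤ x :=
    ⟨fun l => Nat.zero_le _, Nat.zero_le _, hδ⟩
  have hyfeas : IsFeasible N (unitVec i) (0, 0, δ) := isFeasible_unitVec_barred hi fun d =>
    hexcess d ▸ neg_nonpos.2 (barredDeficit_nonneg N i x.2.2 d)
  refine ⟨_, hyx, hyfeas, isFeasible_sub (unitVec_le hmi) hyx (fun k hk => ?_) ?_ ?_
    (fun d hd hdN => ?_) (fun d hd hdN => ?_) (fun d k hd hdk hk => ?_)⟩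
  · have := hx.slack_nonneg k hk
    have := hx.slack_nonneg (i - 1) (by omega)
    have := fun hik => slack_sub_one_lt_slack hi hik hmi fun l hil hlk => hfree l hil (hlk.trans hk)
    rw [slack_unitVec_zero hi]
    split_ifs <;> omega
  · simp only [slack_unitVec_zero hi, unitVec, Pi.zero_apply]
    split_ifs <;> omega
  · simp only [slack_unitVec_zero hi, unitVec]
    split_ifs <;> omega
  · have := excess_add_barredDeficit_le hiN hmi (hx.excess_le_left d hd hdN)
      (hx.excess_le_left (i + 1) (by omega) (by omega)) (by simp only [excess]; omega)
    simp only [hexcess, Pi.zero_apply]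
    omega
  · have := excess_add_barredDeficit_le hiN hmi (hx.excess_le_right d hd hdN)
      (hx.excess_le_right (i + 1) (by omega) (by omega)) (by simp only [excess]; omega)
    simp only [hexcess]
    omega
  · have := hx.excess_add_barredDeficit_le_slack_sub hi hiN hmi hfree hloose hleft hright hd hdk hk
    rw [hexcess, slack_unitVec_zero hi]
    omega

/-! ### Choice of the summand -/

theorem IsFeasible.hasUnitSummand_of_le (hx : IsFeasible N m x) {i : ℕ} (hi : 1 ≤ i)
    (hiN : i ≤ N) (hmi : 1 ≤ m i) : HasUnitSummand N m i x := by
  obtain ⟨j, hij, hjN, hfree, hj⟩ : ∃ j, i ≤ j ∧ j ≤ N + 1 ∧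
      (∀ l, i ≤ l → l < j → x.1 l = 0) ∧ (j ≤ N → 1 ≤ x.1 j) := by
    have hex : ∃ l, i ≤ l ∧ (l = N + 1 ∨ 1 ≤ x.1 l) := ⟨N + 1, by omega, Or.inl rfl⟩
    refine ⟨Nat.find hex, (Nat.find_spec hex).1, Nat.find_min' hex ⟨by omega, Or.inl rfl⟩,
      fun l hil hl => ?_, fun hN => ?_⟩
    · have := Nat.find_min hex hl
      omega
    · have := (Nat.find_spec hex).2
      omega
  by_cases htight : ∃ d k, i < d ∧ d ≤ k + 1 ∧ k < j ∧ k ≤ N ∧ excess N m x d = slack m x.1 k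
  · obtain ⟨d, k, hid, hdk, hkj, hkN, heq⟩ := htight
    exact hx.hasUnitSummand_of_excess_eq_slack hi hmi hfree hid hdk hkj hkN heq
  have hloose : ∀ d k, i < d → d ≤ k + 1 → k < j → k ≤ N → excess N m x d < slack m x.1 k :=
    fun d k hid hdk hkj hkN => lt_of_le_of_ne (hx.excess_le_slack d k (by omega) hdk hkN)
      fun heq => htight ⟨d, k, hid, hdk, hkj, hkN, heq⟩
  rcases hjN.lt_or_eq with hjN | rfl
  · exact hx.hasUnitSummand_of_excess_lt_slack hi hiN hij hmi (fun l hil hlj _ => hfree l hil hlj)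
      hloose (Or.inl ⟨by omega, hj (by omega)⟩)
  replace hfree : ∀ l, i ≤ l → l ≤ N → x.1 l = 0 := fun l hil hlN => hfree l hil (by omega)
  replace hloose : ∀ d k, i < d → d ≤ k + 1 → k ≤ N → excess N m x d < slack m x.1 k :=
    fun d k hid hdk hkN => hloose d k hid hdk (by omega) hkN
  rcases hx.left_le.eq_or_lt with hleft | hleft
  · exact hx.hasUnitSummand_of_excess_lt_slack hi hiN hij hmi (fun l hil _ => hfree l hil)
      (fun d k hid hdk _ => hloose d k hid hdk) (Or.inr (Or.inl ⟨rfl, hleft⟩))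
  rcases hx.right_le.eq_or_lt with hright | hright
  · exact hx.hasUnitSummand_of_excess_lt_slack hi hiN (by omega) hmi (fun l hil _ => hfree l hil)
      (fun d k hid hdk _ => hloose d k hid hdk) (Or.inr (Or.inr ⟨rfl, hright⟩))
  exact hx.hasUnitSummand_of_forall_eq_zero hi hiN hmi hfree hloose hleft hright

theorem IsFeasible.hasUnitSummand (hx : IsFeasible N m x) {i : ℕ} (hi : 1 ≤ i) (hiN : i ≤ N + 2)
    (hmi : 1 ≤ m i) : HasUnitSummand N m i x := by
  rcases Nat.lt_or_ge N i with hNi | hiN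
  · have := hx.left_le
    have := hx.right_le
    by_cases hsat : (i = N + 1 ∧ (x.1 (N + 1) : ℤ) = slack m x.1 N + m (N + 1)) ∨
      (i = N + 2 ∧ (x.2.1 : ℤ) = slack m x.1 N + m (N + 2))
    · exact hx.hasUnitSummand_of_saturated hmi hsat
    · exact hx.hasUnitSummand_of_not_saturated hmi (by omega)
  · exact hx.hasUnitSummand_of_le hi hiN hmi

end

/-- Decomposition property in type `D`: any point of `S_D(m)` with `m_i ≥ 1` can be reduced
by a point of `S_D(e_i)` to a point of `S_D(m - e_i)`. -/
theorem SD_decomposition (n : ℕ) (hn : 4 ≤ n) (m : ℕ → ℕ) (i : ℕ) (hi1 : 1 ≤ i) (hin : i ≤ n)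
    (hmi : 1 ≤ m i) (x : (ℕ → ℕ) × ℕ × (ℕ → ℕ)) (hx : x ∈ SD n m) :
    ∃ y ∈ SD n (unitVec i), y ≤ x ∧ x - y ∈ SD n (m - unitVec i) := by
  obtain ⟨N, rfl⟩ := Nat.exists_eq_add_of_le' (show 2 ≤ n by omega)
  have hN : 1 ≤ N := by omega
  have hsupp : IsSupported N x := ⟨hx.1, hx.2.1⟩
  obtain ⟨y, hyx, hy, hxy⟩ := (isFeasible_of_mem_SD hx).hasUnitSummand hi1 hin hmi
  exact ⟨y, mem_SD_of_isFeasible hN (hsupp.mono hyx) hy, hyx,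
    mem_SD_of_isFeasible hN (hsupp.mono tsub_le_self) hxy⟩
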